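/- Let X ∈ ℝ^{n×p} have full column rank on index set A ⊆ {1,…,p}, and let β̂ with support A satisfy the LASSO KKT conditions for (X, y, λ): X_Aᵀ(y − X_A β̂_A) = λ·sign(β̂_A) and ‖X_{A^c}ᵀ(y − X β̂)‖_∞ ≤ λ. Then ‖X β̂‖² ≤ ‖X_A(X_AᵀX_A)^{-1}X_Aᵀ y‖², i.e., the norm of the LASSO fit is at most the norm of the least-squares fit onto the active columns. -/

import Mathlib

open Matrix

/-- The squared norm of the LASSO fit is at most that of the least-squares fit onto the
active columns. -/
theorem lasso_fit_le_least_squares_fit {n p : ℕ}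
    (X : Matrix (Fin n) (Fin p) ℝ) (y : Fin n → ℝ) (lam : ℝ) (hlam : 0 < lam)
    (A : Finset (Fin p)) (βhat : Fin p → ℝ)
    (hsupp : ∀ j, j ∉ A → βhat j = 0)
    (XA : Matrix (Fin n) {j // j ∈ A} ℝ) (hXA : XA = X.submatrix id (fun j => j.val))
    (hrank : IsUnit (XAᵀ * XA).det)
    (hkkt : ∀ j : {j // j ∈ A},
      (XAᵀ.mulVec (y - X.mulVec βhat)) j = lam * Real.sign (βhat j.val))
    (hdual : ∀ j, j ∉ A → |(Xᵀ.mulVec (y - X.mulVec βhat)) j| ≤ lam) :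
    (∑ i, (X.mulVec βhat i)^2) ≤
      ∑ i, ((XA * (XAᵀ * XA)⁻¹ * XAᵀ).mulVec y i)^2 := by
  set b : {j // j ∈ A} → ℝ := fun j => βhat j.val with hb
  have hf : X.mulVec βhat = XA.mulVec b := by
    ext i
    subst hXA
    simp only [Matrix.mulVec, dotProduct, Matrix.submatrix_apply, id, hb]
    rw [← Finset.sum_subset (Finset.subset_univ A)
      (fun j _ hj => by rw [hsupp j hj, mul_zero])]
    exact (Finset.sum_coe_sort A (fun j => X i j * βhat j)).symm
  set f := X.mulVec βhat with hfdef
  set g := (XA * (XAᵀ * XA)⁻¹ * XAᵀ).mulVec y with hg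
  have hPy : XAᵀ.mulVec g = XAᵀ.mulVec y := by
    rw [hg, Matrix.mulVec_mulVec, ← Matrix.mul_assoc, ← Matrix.mul_assoc,
      Matrix.mul_nonsing_inv _ hrank, Matrix.one_mul]
  have hdot : ∀ v, f ⬝ᵥ v = b ⬝ᵥ XAᵀ.mulVec v := by
    intro v
    rw [hf, Matrix.mulVec_transpose, dotProduct_comm b, ← Matrix.dotProduct_mulVec,
      dotProduct_comm]
  have h1 : 0 ≤ f ⬝ᵥ (y - f) := by
    rw [hdot]
    refine Finset.sum_nonneg fun j _ => ?_
    rw [hkkt j]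
    have : 0 ≤ b j * Real.sign (b j) := by
      rcases lt_trichotomy (b j) 0 with h | h | h
      · rw [Real.sign_of_neg h]; linarith
      · rw [h]; simp
      · rw [Real.sign_of_pos h]; linarith
    have h2 := mul_nonneg hlam.le this
    calc 0 ≤ lam * (b j * Real.sign (b j)) := h2
      _ = b j * (lam * Real.sign (b j)) := by ring
  have h2 : f ⬝ᵥ g = f ⬝ᵥ y := by rw [hdot, hdot, hPy]
  rw [dotProduct_sub, ← h2] at h1
  have h3 : 0 ≤ ∑ i, (g i - f i) ^ 2 := Finset.sum_nonneg fun i _ => sq_nonneg _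
  have h4 : ∑ i, (g i - f i) ^ 2 = ∑ i, g i ^ 2 - 2 * (f ⬝ᵥ g) + f ⬝ᵥ f := by
    simp only [dotProduct, Finset.mul_sum, ← Finset.sum_sub_distrib, ← Finset.sum_add_distrib]
    exact Finset.sum_congr rfl fun i _ => by ring
  have h5 : ∑ i, f i ^ 2 = f ⬝ᵥ f := Finset.sum_congr rfl fun i _ => by ring
  linarith
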